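/- The curvature map A ↦ F, where F_{μν} = ∂_μ A_ν − ∂_ν A_μ + i g (A_μ A_ν − A_ν A_μ), is a bijection from the set of smooth maps A : ℝⁿ → (Fin n → Matrix (Fin N) (Fin N) ℂ) satisfying the Fock–Schwinger gauge condition ∑_ν x^ν A_ν(x) = 0, onto the set of smooth maps F : ℝⁿ → (Fin n → Fin n → Matrix (Fin N) (Fin N) ℂ) with F_{μν} = −F_{νμ} satisfying the Bianchi identity for curvature. The inverse map is F ↦ A with A_μ(x) = ∫₀¹ t ∑_ν x^ν F_{νμ}(tx) dt. -/

import Mathlib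

/-- The partial derivative `∂_μ f` of a complex-valued function on `ℝⁿ`. -/
noncomputable def pd {n : ℕ} (μ : Fin n) (f : (Fin n → ℝ) → ℂ) (x : Fin n → ℝ) : ℂ :=
  fderiv ℝ f x (Pi.single μ 1)

/-- The curvature map `A ↦ F`, `F_{μν} = ∂_μ A_ν − ∂_ν A_μ + i g (A_μ A_ν − A_ν A_μ)`. -/
noncomputable def curvMap {n N : ℕ} (g : ℝ)
    (A : (Fin n → ℝ) → Fin n → Matrix (Fin N) (Fin N) ℂ) :
    (Fin n → ℝ) → Fin n → Fin n → Matrix (Fin N) (Fin N) ℂ :=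
  fun x μ ν => Matrix.of fun a b =>
    pd μ (fun y => A y ν a b) x - pd ν (fun y => A y μ a b) x
      + Complex.I * (g : ℂ) * ((A x μ * A x ν) a b - (A x ν * A x μ) a b)

/-- The radial integral map `F ↦ A`, `A_μ(x) = ∫₀¹ t ∑_ν x^ν F_{νμ}(tx) dt`. -/
noncomputable def radConn {n N : ℕ}
    (F : (Fin n → ℝ) → Fin n → Fin n → Matrix (Fin N) (Fin N) ℂ) :
    (Fin n → ℝ) → Fin n → Matrix (Fin N) (Fin N) ℂ :=
  fun x μ => Matrix.of fun a b =>
    ∫ t in (0:ℝ)..1, t • ∑ ν, (x ν : ℂ) * F (t • x) ν μ a b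

/-- The set of smooth connections in the Fock–Schwinger gauge `∑_ν x^ν A_ν(x) = 0`. -/
def FockSchwingerSet (n N : ℕ) :
    Set ((Fin n → ℝ) → Fin n → Matrix (Fin N) (Fin N) ℂ) :=
  {A | (∀ μ a b, ContDiff ℝ (⊤ : ℕ∞) fun x => A x μ a b) ∧
    ∀ (x : Fin n → ℝ) a b, ∑ ν, (x ν : ℂ) * A x ν a b = 0}

/-- The set of smooth antisymmetric field strengths satisfying the Bianchi identity for
curvature, in which `A` is defined from `F` by the radial integral formula. -/
def BianchiSet (n N : ℕ) (g : ℝ) :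
    Set ((Fin n → ℝ) → Fin n → Fin n → Matrix (Fin N) (Fin N) ℂ) :=
  {F | (∀ μ ν a b, ContDiff ℝ (⊤ : ℕ∞) fun x => F x μ ν a b) ∧
    (∀ (x : Fin n → ℝ) μ ν, F x μ ν = - F x ν μ) ∧
    ∀ (x : Fin n → ℝ) μ ν ρ a b,
      pd μ (fun y => F y ν ρ a b) x + pd ν (fun y => F y ρ μ a b) x
        + pd ρ (fun y => F y μ ν a b) x
        + Complex.I * (g : ℂ) *
          ((radConn F x μ * F x ν ρ - F x ν ρ * radConn F x μ) a b
            + (radConn F x ν * F x ρ μ - F x ρ μ * radConn F x ν) a b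
            + (radConn F x ρ * F x μ ν - F x μ ν * radConn F x ρ) a b) = 0}

open scoped ContDiff Topology
open Set MeasureTheory

/-!
In the radial gauge `A x x = 0`, contracting the curvature `F` with the position gives
`F x x = fderiv A x x + A x`, that is `d/dt (t A(tx)) = t F(tx) x` along rays; integrating over
`[0, 1]` recovers `A` from `F`.

Conversely, let `F` satisfy the Bianchi identity, let `A` be its radial potential and `C` the
curvature of `A`. Then `A` is in the radial gauge and `C x x = F x x`. Contracting the Bianchi
identity with the position gives `fderiv F x x + 2 F x = …`, where the right-hand side depends only
on `A` and on the contraction `F x x`. As `C` satisfies the same equation, `D = C - F` solves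
`fderiv D x x + 2 D x = 0`, so `t² D(tx)` is constant in `t`; it vanishes at `t = 0`, hence `D = 0`.
-/

section ParametricIntegral

variable {E V : Type*} [NormedAddCommGroup E] [NormedSpace ℝ E] [NormedAddCommGroup V]
  [NormedSpace ℝ V] {f : E → ℝ → V}

lemma contDiff_fderiv_uncurry {k : ℕ∞ω} (hf : ContDiff ℝ (k + 1) f.uncurry) :
    ContDiff ℝ k fun p : E × ℝ => fderiv ℝ (f · p.2) p.1 :=
  ContDiff.fderiv_succ (f := fun (p : E × ℝ) x => f x p.2)
    (hf.comp (by fun_prop : ContDiff ℝ (k + 1) fun q : (E × ℝ) × E => (q.2, q.1.2))) contDiff_fst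

lemma hasFDerivAt_intervalIntegral (hf : ContDiff ℝ 1 f.uncurry) (a b : ℝ) (x₀ : E) :
    HasFDerivAt (fun x => ∫ t in a..b, f x t) (∫ t in a..b, fderiv ℝ (f · t) x₀) x₀ := by
  have hf' : Continuous fun p : E × ℝ => fderiv ℝ (f · p.2) p.1 :=
    (contDiff_fderiv_uncurry (k := 0) (by simpa using hf)).continuous
  have hslice (x : E) : Continuous fun t : ℝ => (x, t) := by fun_prop
  have hdiff (t : ℝ) : Differentiable ℝ (f · t) :=
    (hf.differentiable one_ne_zero).comp (by fun_prop : Differentiable ℝ fun x : E => (x, t))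
  obtain ⟨C, hC⟩ := (isCompact_uIcc (a := a) (b := b)).exists_bound_of_continuousOn
    (hf'.comp (hslice x₀)).continuousOn
  have hbound : ∀ᶠ x in 𝓝 x₀, ∀ t ∈ uIcc a b, ‖fderiv ℝ (f · t) x‖ ≤ C + 1 := by
    refine isCompact_uIcc.eventually_forall_of_forall_eventually fun t ht => ?_
    have hlt : ‖fderiv ℝ (f · t) x₀‖ < C + 1 := (hC t ht).trans_lt (lt_add_one C)
    exact (hf'.norm.tendsto (x₀, t)).eventually (ge_mem_nhds hlt)
  exact intervalIntegral.hasFDerivAt_integral_of_dominated_of_fderiv_le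
    (F' := fun x t => fderiv ℝ (f · t) x) (bound := fun _ => C + 1) hbound
    (.of_forall fun x => (hf.continuous.comp (hslice x)).aestronglyMeasurable)
    ((hf.continuous.comp (hslice x₀)).intervalIntegrable a b)
    (hf'.comp (hslice x₀)).aestronglyMeasurable
    (.of_forall fun t ht x hx => hx t (uIoc_subset_uIcc ht))
    intervalIntegrable_const
    (.of_forall fun t _ x _ => (hdiff t x).hasFDerivAt)

lemma contDiff_iteratedFDeriv_uncurry {k : ℕ∞ω} (m : ℕ) (hf : ContDiff ℝ (k + m) f.uncurry) :
    ContDiff ℝ k fun p : E × ℝ => iteratedFDeriv ℝ m (f · p.2) p.1 := by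
  induction m generalizing k with
  | zero =>
    exact (continuousMultilinearCurryFin0 ℝ E V).symm.contDiff.comp
      (by simpa [Function.uncurry_def] using hf)
  | succ m ih =>
    have hm : ContDiff ℝ (k + 1) fun p : E × ℝ => iteratedFDeriv ℝ m (f · p.2) p.1 :=
      ih (by rwa [add_assoc, add_comm 1, ← Nat.cast_add_one])
    exact (continuousMultilinearCurryLeftEquiv ℝ (fun _ : Fin (m + 1) => E) V).symm.contDiff.comp
      (contDiff_fderiv_uncurry (f := fun x t => iteratedFDeriv ℝ m (f · t) x) hm)

theorem contDiff_intervalIntegral [CompleteSpace V] {n : ℕ∞} (hf : ContDiff ℝ n f.uncurry)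
    (a b : ℝ) : ContDiff ℝ n fun x => ∫ t in a..b, f x t := by
  have hjoint (k m : ℕ) (h : ((k + m : ℕ) : ℕ∞) ≤ n) :
      ContDiff ℝ k fun p : E × ℝ => iteratedFDeriv ℝ m (f · p.2) p.1 :=
    contDiff_iteratedFDeriv_uncurry m (hf.of_le (by exact_mod_cast h))
  let p : E → FormalMultilinearSeries ℝ E V :=
    fun x m => ∫ t in a..b, iteratedFDeriv ℝ m (f · t) x
  have hp : HasFTaylorSeriesUpTo n (fun x => ∫ t in a..b, f x t) p := by
    refine ⟨fun x => ?_, fun m hm x => ?_, fun m hm => ?_⟩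
    · exact ((continuousMultilinearCurryFin0 ℝ E V).toLinearIsometry.intervalIntegral_comp_comm
        _).symm
    · have hcurry : ∫ t in a..b, fderiv ℝ (iteratedFDeriv ℝ m (f · t)) x =
          (p x (m + 1)).curryLeft := by
        simp only [fderiv_iteratedFDeriv]
        exact LinearIsometry.intervalIntegral_comp_comm (𝕜 := ℝ) (E := E [×(m + 1)]→L[ℝ] V)
          (F := E →L[ℝ] E [×m]→L[ℝ] V)
          (continuousMultilinearCurryLeftEquiv ℝ (fun _ : Fin (m + 1) => E) V).toLinearIsometry _
      rw [← hcurry]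
      have hm' : ((1 + m : ℕ) : ℕ∞) ≤ n := by
        rw [add_comm]
        exact_mod_cast Order.add_one_le_of_lt (WithTop.coe_lt_coe.1 hm)
      exact hasFDerivAt_intervalIntegral (f := fun x t => iteratedFDeriv ℝ m (f · t) x)
        (hjoint 1 m hm') a b x
    · have := (hjoint 0 m (by simpa using mod_cast hm)).continuous
      exact intervalIntegral.continuous_parametric_intervalIntegral_of_continuous' this a b
  exact hp.contDiff

end ParametricIntegral

section EulerField

variable {E V : Type*} [NormedAddCommGroup E] [NormedSpace ℝ E] [NormedAddCommGroup V]
  [NormedSpace ℝ V]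

lemma hasDerivAt_pow_smul_comp_smul {f : E → V} (hf : Differentiable ℝ f) (k : ℕ) (x : E) (t : ℝ) :
    HasDerivAt (fun s : ℝ => s ^ (k + 1) • f (s • x))
      (t ^ k • (fderiv ℝ f (t • x) (t • x) + ((k : ℝ) + 1) • f (t • x))) t := by
  have hray : HasDerivAt (fun s : ℝ => f (s • x)) (fderiv ℝ f (t • x) x) t := by
    have hline : HasDerivAt (fun s : ℝ => s • x) x t := by
      simpa using (hasDerivAt_id t).smul_const x
    exact (hf (t • x)).hasFDerivAt.comp_hasDerivAt t hline
  refine ((hasDerivAt_pow (k + 1) t).smul hray).congr_deriv ?_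
  simp only [map_smul, Nat.cast_add_one, Nat.add_sub_cancel]
  module

lemma eq_of_fderiv_apply_self_add_smul_eq {f g : E → V} (hf : Differentiable ℝ f)
    (hg : Differentiable ℝ g) (k : ℕ)
    (h : ∀ x, fderiv ℝ f x x + ((k : ℝ) + 1) • f x = fderiv ℝ g x x + ((k : ℝ) + 1) • g x) :
    f = g := by
  ext1 x
  have hderiv (t : ℝ) :
      HasDerivAt (fun s : ℝ => s ^ (k + 1) • f (s • x) - s ^ (k + 1) • g (s • x)) 0 t := by
    simpa only [h, sub_self] using
      (hasDerivAt_pow_smul_comp_smul hf k x t).fun_sub (hasDerivAt_pow_smul_comp_smul hg k x t)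
  simpa [sub_eq_zero] using is_const_of_deriv_eq_zero (fun t => (hderiv t).differentiableAt)
    (fun t => (hderiv t).deriv) 1 0

end EulerField

section CyclicSum

variable {E V : Type*} [NormedAddCommGroup E] [NormedSpace ℝ E] [NormedAddCommGroup V]
  [NormedSpace ℝ V]

/-- The sum of a trilinear map over the cyclic permutations of its arguments, which is the shape of
the Bianchi identity. -/
noncomputable def cyclicSum (T : E →L[ℝ] E →L[ℝ] E →L[ℝ] V) (u v w : E) : V :=
  T u v w + T v w u + T w u v

lemma cyclicSum_rotate (T : E →L[ℝ] E →L[ℝ] E →L[ℝ] V) (u v w : E) :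
    cyclicSum T v w u = cyclicSum T u v w := by
  simp only [cyclicSum]
  abel

lemma cyclicSum_eq_zero_of_basis {ι : Type*} (b : Module.Basis ι ℝ E)
    (T : E →L[ℝ] E →L[ℝ] E →L[ℝ] V) (h : ∀ i j k, cyclicSum T (b i) (b j) (b k) = 0)
    (u v w : E) : cyclicSum T u v w = 0 := by
  have extend_left (v w : E) (h : ∀ i, cyclicSum T (b i) v w = 0) (u : E) :
      cyclicSum T u v w = 0 :=
    LinearMap.congr_fun
      (b.ext h : ((T.flip v).flip w + T v w + (T w).flip v : E →L[ℝ] V).toLinearMap = 0) u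
  refine extend_left v w (fun i => ?_) u
  rw [← cyclicSum_rotate]
  refine extend_left w (b i) (fun j => ?_) v
  rw [← cyclicSum_rotate]
  refine extend_left (b i) (b j) (fun k => ?_) w
  rw [← cyclicSum_rotate]
  exact h i j k

end CyclicSum

section RadialGauge

variable {E V : Type*} [NormedAddCommGroup E] [NormedSpace ℝ E] [NormedAddCommGroup V]
  [NormedSpace ℝ V]

lemma fderiv_apply_self_of_radial {A : E → E →L[ℝ] V} (hA : Differentiable ℝ A)
    (hrad : ∀ x, A x x = 0) (x u : E) : fderiv ℝ A x u x = -A x u := by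
  have h : fderiv ℝ (fun y => A y y) x u = 0 := by simp [hrad]
  rw [fderiv_clm_apply (hA x) differentiableAt_fun_id] at h
  simpa [add_comm, eq_neg_iff_add_eq_zero] using h

lemma fderiv_apply_apply {F : E → E →L[ℝ] E →L[ℝ] V} (hF : Differentiable ℝ F) (x u v w : E) :
    fderiv ℝ (fun y => F y v w) x u = fderiv ℝ F x u v w := by
  rw [(((hF x).hasFDerivAt.clm_apply (hasFDerivAt_const v x)).clm_apply
    (hasFDerivAt_const w x)).fderiv]
  simp

/-- A continuous Lie bracket on a normed space, as a bilinear map. It is not a `LieRing` instance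
because the bracket `i g (M N - N M)` of matrices depends on the coupling constant `g`. -/
structure IsLieBracket (B : V →L[ℝ] V →L[ℝ] V) : Prop where
  skew : ∀ v w, B v w = -B w v
  jacobi : ∀ u v w, B u (B v w) + B v (B w u) + B w (B u v) = 0

/-- The curvature `dA + B(A, A)` of a connection one-form `A`, a two-form encoded as a bilinear
map; a factor such as `i g` is part of the bracket `B`. -/
noncomputable def curvature (B : V →L[ℝ] V →L[ℝ] V) (A : E → E →L[ℝ] V) (x : E) :
    E →L[ℝ] E →L[ℝ] V :=
  fderiv ℝ A x - (fderiv ℝ A x).flip + B.bilinearComp (A x) (A x)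

/-- The derivative of a two-form `F` along its first argument, covariant for the connection `A`. -/
noncomputable def covariantFDeriv (B : V →L[ℝ] V →L[ℝ] V) (A : E → E →L[ℝ] V)
    (F : E → E →L[ℝ] E →L[ℝ] V) (x : E) : E →L[ℝ] E →L[ℝ] E →L[ℝ] V :=
  fderiv ℝ F x + ((B.precompR E).precompR E).flip (F x) ∘L A x

/-- The one-form obtained by integrating a two-form along the rays from the origin, which inverts
the curvature in the radial gauge. -/
noncomputable def radialPotential (F : E → E →L[ℝ] E →L[ℝ] V) (x : E) : E →L[ℝ] V :=
  ∫ t in (0 : ℝ)..1, t • F (t • x) x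

variable (E V) in
/-- The smooth one-forms in the Fock–Schwinger gauge, which annihilate the radial direction. -/
def radialGauge : Set (E → E →L[ℝ] V) :=
  {A | ContDiff ℝ ∞ A ∧ ∀ x, A x x = 0}

variable (E) in
/-- The smooth two-forms satisfying the Bianchi identity for their own radial potential. -/
def bianchiForms (B : V →L[ℝ] V →L[ℝ] V) : Set (E → E →L[ℝ] E →L[ℝ] V) :=
  {F | ContDiff ℝ ∞ F ∧ (∀ x u v, F x u v = -F x v u) ∧
    ∀ x u v w, cyclicSum (covariantFDeriv B (radialPotential F) F x) u v w = 0}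

variable {B : V →L[ℝ] V →L[ℝ] V} {A : E → E →L[ℝ] V} {F : E → E →L[ℝ] E →L[ℝ] V}

lemma curvature_apply (B : V →L[ℝ] V →L[ℝ] V) (A : E → E →L[ℝ] V) (x u v : E) :
    curvature B A x u v = fderiv ℝ A x u v - fderiv ℝ A x v u + B (A x u) (A x v) := rfl

lemma covariantFDeriv_apply (B : V →L[ℝ] V →L[ℝ] V) (A : E → E →L[ℝ] V)
    (F : E → E →L[ℝ] E →L[ℝ] V) (x u v w : E) :
    covariantFDeriv B A F x u v w = fderiv ℝ F x u v w + B (A x u) (F x v w) := rfl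

lemma curvature_swap (hB : IsLieBracket B) (A : E → E →L[ℝ] V) (x u v : E) :
    curvature B A x u v = -curvature B A x v u := by
  rw [curvature_apply, curvature_apply, hB.skew (A x u)]
  abel

lemma contDiff_flip {X Y : Type*} [NormedAddCommGroup X] [NormedSpace ℝ X] [NormedAddCommGroup Y]
    [NormedSpace ℝ Y] {n : ℕ∞ω} {f : E → X →L[ℝ] Y →L[ℝ] V} (hf : ContDiff ℝ n f) :
    ContDiff ℝ n fun x => (f x).flip := by
  have hflip := LinearIsometryEquiv.contDiff (𝕜 := ℝ) (n := n) (E := X →L[ℝ] Y →L[ℝ] V)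
    (F := Y →L[ℝ] X →L[ℝ] V) (ContinuousLinearMap.flipₗᵢ ℝ X Y V)
  exact hflip.comp hf

lemma contDiff_curvature {n : ℕ∞ω} (B : V →L[ℝ] V →L[ℝ] V) (hA : ContDiff ℝ (n + 1) A) :
    ContDiff ℝ n (curvature B A) := by
  have hA' : ContDiff ℝ n (fderiv ℝ A) := hA.fderiv_right le_rfl
  have hAn : ContDiff ℝ n A := hA.of_le le_self_add
  have hBA : ContDiff ℝ n fun x => B ∘L A x := contDiff_const.clm_comp hAn
  have hbracket : ContDiff ℝ n fun x => ((B ∘L A x).flip ∘L A x).flip :=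
    contDiff_flip ((contDiff_flip hBA).clm_comp hAn)
  exact (hA'.sub (contDiff_flip hA')).add hbracket

lemma fderiv_curvature_apply (B : V →L[ℝ] V →L[ℝ] V) (hA : ContDiff ℝ 2 A) (x u v w : E) :
    fderiv ℝ (curvature B A) x u v w =
      fderiv ℝ (fderiv ℝ A) x u v w - fderiv ℝ (fderiv ℝ A) x u w v
        + (B (A x v) (fderiv ℝ A x u w) + B (fderiv ℝ A x u v) (A x w)) := by
  have hA₁ (v : E) := ((hA.differentiable two_ne_zero x).hasFDerivAt).clm_apply
    (hasFDerivAt_const v x)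
  have hA₂ (v w : E) :=
    (((hA.fderiv_right (m := 1) le_rfl).differentiable one_ne_zero x).hasFDerivAt.clm_apply
      (hasFDerivAt_const v x)).clm_apply (hasFDerivAt_const w x)
  have hexpand : fderiv ℝ (fun y => curvature B A y v w) x = _ :=
    (((hA₂ v w).sub (hA₂ w v)).add (B.hasFDerivAt_of_bilinear (hA₁ v) (hA₁ w))).fderiv
  rw [← fderiv_apply_apply ((contDiff_curvature B (n := 1) hA).differentiable one_ne_zero), hexpand]
  simp

theorem cyclicSum_covariantFDeriv_curvature (hB : IsLieBracket B) (hA : ContDiff ℝ 2 A)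
    (x u v w : E) : cyclicSum (covariantFDeriv B A (curvature B A) x) u v w = 0 := by
  have hsymm : IsSymmSndFDerivAt ℝ A x := hA.contDiffAt.isSymmSndFDerivAt (by simp)
  simp only [cyclicSum, covariantFDeriv_apply, fderiv_curvature_apply B hA, curvature_apply,
    map_add, map_sub]
  rw [hsymm.eq v u, hsymm.eq w u, hsymm.eq w v, hB.skew (fderiv ℝ A x u v),
    hB.skew (fderiv ℝ A x v w), hB.skew (fderiv ℝ A x w u)]
  linear_combination (norm := module) hB.jacobi (A x u) (A x v) (A x w)

lemma curvature_apply_self (B : V →L[ℝ] V →L[ℝ] V) (hA : Differentiable ℝ A)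
    (hrad : ∀ x, A x x = 0) (x : E) : curvature B A x x = fderiv ℝ A x x + A x := by
  ext u
  simp [curvature_apply, hrad, fderiv_apply_self_of_radial hA hrad]

lemma fderiv_apply_self_add_two_smul_of_cyclicSum_eq_zero (hF : Differentiable ℝ F)
    (hskew : ∀ x u v, F x u v = -F x v u) (hrad : ∀ x, A x x = 0)
    (hbianchi : ∀ x u v w, cyclicSum (covariantFDeriv B A F x) u v w = 0) (x u v : E) :
    fderiv ℝ F x x u v + (2 : ℝ) • F x u v =
      fderiv ℝ (fun y => F y y) x u v - fderiv ℝ (fun y => F y y) x v u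
        + B (A x u) (F x x v) - B (A x v) (F x x u) := by
  have hcontract (w z : E) : fderiv ℝ (fun y => F y y) x w z = fderiv ℝ F x w x z + F x w z := by
    rw [fderiv_clm_apply (hF x) differentiableAt_fun_id]
    simp [add_comm]
  have hdskew : fderiv ℝ F x u v x = -fderiv ℝ F x u x v := by
    simp only [← fderiv_apply_apply hF, hskew _ v x, fderiv_fun_neg, neg_apply]
  have h := hbianchi x x u v
  simp only [cyclicSum, covariantFDeriv_apply, hrad, hdskew, hskew x v x, map_zero, map_neg,
    zero_apply] at h
  rw [hcontract, hcontract]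
  linear_combination (norm := module) h + hskew x u v

lemma smul_radialPotential_smul (F : E → E →L[ℝ] E →L[ℝ] V) (s : ℝ) (x : E) :
    s • radialPotential F (s • x) = ∫ t in (0 : ℝ)..s, t • F (t • x) x := by
  have := intervalIntegral.smul_integral_comp_mul_right (a := 0) (b := 1)
    (fun t : ℝ => t • F (t • x) x) s
  rw [zero_mul, one_mul] at this
  rw [radialPotential, ← this]
  simp only [map_smul, smul_smul, mul_comm]

variable [CompleteSpace V]

theorem radialPotential_curvature (B : V →L[ℝ] V →L[ℝ] V) (hA : A ∈ radialGauge E V) :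
    radialPotential (curvature B A) = A := by
  have hdiff : Differentiable ℝ A := hA.1.differentiable (by simp)
  have hderiv (x : E) (t : ℝ) :
      HasDerivAt (fun s : ℝ => s • A (s • x)) (t • curvature B A (t • x) x) t := by
    rw [← map_smul, curvature_apply_self B hdiff hA.2]
    simpa using hasDerivAt_pow_smul_comp_smul hdiff 0 x t
  have hcont (x : E) : Continuous fun t : ℝ => t • curvature B A (t • x) x := by
    have := (contDiff_curvature (n := ∞) B hA.1).continuous
    fun_prop
  ext1 x
  rw [radialPotential, intervalIntegral.integral_eq_sub_of_hasDerivAt (fun t _ => hderiv x t)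
    ((hcont x).intervalIntegrable 0 1)]
  simp

lemma radialPotential_mem_radialGauge (hF : ContDiff ℝ ∞ F) (hskew : ∀ x u v, F x u v = -F x v u) :
    radialPotential F ∈ radialGauge E V := by
  have hcont : ContDiff ℝ ∞ (fun x (t : ℝ) => t • F (t • x) x).uncurry :=
    contDiff_snd.smul ((hF.comp (contDiff_snd.smul contDiff_fst)).clm_apply contDiff_fst)
  refine ⟨contDiff_intervalIntegral hcont 0 1, fun x => ?_⟩
  have hint : IntervalIntegrable (fun t : ℝ => t • F (t • x) x) volume 0 1 :=
    (hcont.continuous.comp (by fun_prop : Continuous fun t : ℝ => (x, t))).intervalIntegrable 0 1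
  have halt (y : E) : F y x x = 0 := by
    linear_combination (norm := module) (1 / 2 : ℝ) • hskew y x x
  simp [radialPotential, ContinuousLinearMap.intervalIntegral_apply hint, halt]

lemma fderiv_radialPotential_apply_self (hF : ContDiff ℝ ∞ F)
    (hP : Differentiable ℝ (radialPotential F)) (x : E) :
    fderiv ℝ (radialPotential F) x x + radialPotential F x = F x x := by
  have hcont : Continuous fun t : ℝ => t • F (t • x) x := by
    have := hF.continuous
    fun_prop
  have hint := intervalIntegral.integral_hasDerivAt_right (hcont.intervalIntegrable 0 1)
    (hcont.stronglyMeasurableAtFilter _ _) hcont.continuousAt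
  simp only [← smul_radialPotential_smul] at hint
  simpa using (hasDerivAt_pow_smul_comp_smul hP 0 x 1).unique (by simpa using hint)

theorem curvature_radialPotential (hB : IsLieBracket B) (hF : F ∈ bianchiForms E B) :
    curvature B (radialPotential F) = F := by
  obtain ⟨hsmooth, hskew, hbianchi⟩ := hF
  have hP := radialPotential_mem_radialGauge hsmooth hskew
  have hdiffP : Differentiable ℝ (radialPotential F) := hP.1.differentiable (by simp)
  have hdiffF : Differentiable ℝ F := hsmooth.differentiable (by simp)
  have hdiffC : Differentiable ℝ (curvature B (radialPotential F)) :=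
    (contDiff_curvature (n := ∞) B hP.1).differentiable (by simp)
  have hcontract : (fun x => curvature B (radialPotential F) x x) = fun x => F x x := by
    ext1 x
    rw [curvature_apply_self B hdiffP hP.2, fderiv_radialPotential_apply_self hsmooth hdiffP]
  refine eq_of_fderiv_apply_self_add_smul_eq hdiffC hdiffF 1 fun x => ?_
  ext u v
  have hC := fderiv_apply_self_add_two_smul_of_cyclicSum_eq_zero hdiffC (curvature_swap hB _) hP.2
    (cyclicSum_covariantFDeriv_curvature hB (contDiff_infty.1 hP.1 2)) x u v
  have hF := fderiv_apply_self_add_two_smul_of_cyclicSum_eq_zero hdiffF hskew hP.2 hbianchi x u v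
  rw [hcontract, congrFun hcontract x, ← hF] at hC
  simpa [one_add_one_eq_two] using hC

theorem curvature_mem_bianchiForms (hB : IsLieBracket B) (hA : A ∈ radialGauge E V) :
    curvature B A ∈ bianchiForms E B := by
  refine ⟨contDiff_curvature B hA.1, curvature_swap hB A, ?_⟩
  rw [radialPotential_curvature B hA]
  exact cyclicSum_covariantFDeriv_curvature hB (contDiff_infty.1 hA.1 2)

theorem curvature_map_bijective_fock_schwinger_general (hB : IsLieBracket B) :
    BijOn (curvature B) (radialGauge E V) (bianchiForms E B) ∧
      InvOn radialPotential (curvature B) (radialGauge E V) (bianchiForms E B) := by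
  have hinv : InvOn radialPotential (curvature B) (radialGauge E V) (bianchiForms E B) :=
    ⟨fun _ => radialPotential_curvature B, fun _ => curvature_radialPotential hB⟩
  exact ⟨hinv.bijOn (fun _ => curvature_mem_bianchiForms hB)
    fun _ hF => radialPotential_mem_radialGauge hF.1 hF.2.1, hinv⟩

end RadialGauge

section Components

variable {ι E V : Type*} [Fintype ι] [DecidableEq ι] [NormedAddCommGroup E] [NormedSpace ℝ E]
  [NormedAddCommGroup V] [NormedSpace ℝ V]

/-- The one-form on `ι → ℝ` with given components in the standard basis. -/
noncomputable def oneForm : (ι → V) ≃L[ℝ] (ι → ℝ) →L[ℝ] V :=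
  (ContinuousLinearEquiv.piRing ι).symm

/-- The two-form on `ι → ℝ`, encoded as a bilinear map, with given components in the standard
basis. -/
noncomputable def twoForm (f : ι → ι → V) : (ι → ℝ) →L[ℝ] (ι → ℝ) →L[ℝ] V :=
  oneForm fun i => oneForm (f i)

lemma oneForm_apply (a : ι → V) (x : ι → ℝ) : oneForm a x = ∑ i, x i • a i :=
  LinearEquiv.piRing_symm_apply (R := ℝ) (S := ℝ) a x

@[simp]
lemma oneForm_single (a : ι → V) (i : ι) : oneForm a (Pi.single i 1) = a i := by
  simp [oneForm_apply, Pi.single_apply]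

lemma oneForm_eq_iff {a : ι → V} {T : (ι → ℝ) →L[ℝ] V} :
    oneForm a = T ↔ ∀ i, a i = T (Pi.single i 1) := by
  refine ⟨fun h i => by simp [← h], fun h => ?_⟩
  obtain ⟨b, rfl⟩ := oneForm.surjective T
  simp only [oneForm_single] at h
  rw [funext h]

lemma contDiff_oneForm_iff {k : ℕ∞ω} {a : E → ι → V} :
    ContDiff ℝ k (fun x => oneForm (a x)) ↔ ∀ i, ContDiff ℝ k fun x => a x i :=
  (oneForm.comp_contDiff_iff (f := a)).trans contDiff_pi

lemma differentiable_oneForm_iff {a : E → ι → V} :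
    Differentiable ℝ (fun x => oneForm (a x)) ↔ ∀ i, Differentiable ℝ fun x => a x i :=
  (oneForm.comp_differentiable_iff (f := a)).trans differentiable_pi

lemma fderiv_oneForm_apply_single {a : E → ι → V} (ha : ∀ i, Differentiable ℝ fun x => a x i)
    (x u : E) (i : ι) :
    fderiv ℝ (fun y => oneForm (a y)) x u (Pi.single i 1) = fderiv ℝ (fun y => a y i) x u := by
  have h := fderiv_clm_apply (differentiable_oneForm_iff.2 ha x)
    (differentiableAt_const (Pi.single i (1 : ℝ)))
  simp only [oneForm_single] at h
  simp [h]

lemma twoForm_apply (f : ι → ι → V) (x : ι → ℝ) : twoForm f x = ∑ i, x i • oneForm (f i) :=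
  oneForm_apply _ x

@[simp]
lemma twoForm_single (f : ι → ι → V) (i : ι) : twoForm f (Pi.single i 1) = oneForm (f i) :=
  oneForm_single _ i

lemma twoForm_eq_iff {f : ι → ι → V} {T : (ι → ℝ) →L[ℝ] (ι → ℝ) →L[ℝ] V} :
    twoForm f = T ↔ ∀ i j, f i j = T (Pi.single i 1) (Pi.single j 1) := by
  rw [twoForm, oneForm_eq_iff]
  exact forall_congr' fun _ => oneForm_eq_iff

lemma twoForm_injective : Function.Injective (twoForm (ι := ι) (V := V)) := fun f f' h => by
  ext i j
  simp [twoForm_eq_iff.1 h i j]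

lemma twoForm_swap_iff {f : ι → ι → V} :
    (∀ u v, twoForm f u v = -twoForm f v u) ↔ ∀ i j, f i j = -f j i := by
  refine ⟨fun h i j => by simpa using h (Pi.single i 1) (Pi.single j 1), fun h u v => ?_⟩
  have hflip : twoForm f = -(twoForm f).flip := twoForm_eq_iff.2 fun i j => by simpa using h i j
  exact congr($hflip u v)

lemma contDiff_twoForm_iff {k : ℕ∞ω} {f : E → ι → ι → V} :
    ContDiff ℝ k (fun x => twoForm (f x)) ↔ ∀ i j, ContDiff ℝ k fun x => f x i j :=
  contDiff_oneForm_iff.trans (forall_congr' fun _ => contDiff_oneForm_iff)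

lemma differentiable_twoForm_iff {f : E → ι → ι → V} :
    Differentiable ℝ (fun x => twoForm (f x)) ↔ ∀ i j, Differentiable ℝ fun x => f x i j :=
  differentiable_oneForm_iff.trans (forall_congr' fun _ => differentiable_oneForm_iff)

lemma fderiv_twoForm_apply_single {f : E → ι → ι → V}
    (hf : ∀ i j, Differentiable ℝ fun x => f x i j) (x u : E) (i j : ι) :
    fderiv ℝ (fun y => twoForm (f y)) x u (Pi.single i 1) (Pi.single j 1) =
      fderiv ℝ (fun y => f y i j) x u := by
  rw [← fderiv_oneForm_apply_single (hf i),
    ← fderiv_oneForm_apply_single fun i => differentiable_oneForm_iff.2 (hf i)]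
  rfl

end Components

section FiniteDimensional

variable {E V W : Type*} [NormedAddCommGroup E] [NormedSpace ℝ E] [NormedAddCommGroup V]
  [NormedSpace ℝ V] [FiniteDimensional ℝ V] [NormedAddCommGroup W] [NormedSpace ℝ W]

lemma contDiff_linearEquiv_comp_iff {k : ℕ∞ω} (e : V ≃ₗ[ℝ] W) {f : E → V} :
    ContDiff ℝ k (fun x => e (f x)) ↔ ContDiff ℝ k f :=
  e.toContinuousLinearEquiv.comp_contDiff_iff

lemma fderiv_linearMap_comp (L : V →ₗ[ℝ] W) {f : E → V} {x : E} (hf : DifferentiableAt ℝ f x)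
    (u : E) : fderiv ℝ (fun y => L (f y)) x u = L (fderiv ℝ f x u) :=
  congr($((L.toContinuousLinearMap.hasFDerivAt.comp x hf.hasFDerivAt).fderiv) u)

lemma intervalIntegral_linearMap_comp [CompleteSpace W] (L : V →ₗ[ℝ] W) {f : ℝ → V} {a b : ℝ}
    (hf : IntervalIntegrable f volume a b) : ∫ t in a..b, L (f t) = L (∫ t in a..b, f t) :=
  L.toContinuousLinearMap.intervalIntegral_comp_comm hf

end FiniteDimensional

section ScaledCommutator

variable {R : Type*} [NormedRing R] [NormedAlgebra ℂ R]

variable (R) in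
/-- The bracket `c (M M' - M' M)` of a normed algebra; the theorem uses `c = i g`. -/
noncomputable def scaledCommutator (c : ℂ) : R →L[ℝ] R →L[ℝ] R :=
  c • (ContinuousLinearMap.mul ℝ R - (ContinuousLinearMap.mul ℝ R).flip)

lemma scaledCommutator_apply (c : ℂ) (M M' : R) :
    scaledCommutator R c M M' = c • (M * M' - M' * M) := rfl

variable (R) in
lemma isLieBracket_scaledCommutator (c : ℂ) : IsLieBracket (scaledCommutator R c) where
  skew M M' := by rw [scaledCommutator_apply, scaledCommutator_apply, ← smul_neg, neg_sub]
  jacobi M₁ M₂ M₃ := by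
    simp only [scaledCommutator_apply, mul_sub, sub_mul, smul_sub, mul_smul_comm, smul_mul_assoc,
      mul_assoc]
    abel

end ScaledCommutator

section MatrixFields

-- Of the equivalent matrix norms, this one makes the matrices a normed algebra.
open scoped Matrix.Norms.Operator

variable {n N : ℕ} {g : ℝ} {A : (Fin n → ℝ) → Fin n → Matrix (Fin N) (Fin N) ℂ}
  {F : (Fin n → ℝ) → Fin n → Fin n → Matrix (Fin N) (Fin N) ℂ}

lemma contDiff_matrix_iff {E : Type*} [NormedAddCommGroup E] [NormedSpace ℝ E] {k : ℕ∞ω}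
    {f : E → Matrix (Fin N) (Fin N) ℂ} :
    ContDiff ℝ k f ↔ ∀ a b, ContDiff ℝ k fun x => f x a b :=
  (contDiff_linearEquiv_comp_iff (Matrix.ofLinearEquiv ℝ).symm).symm.trans
    (contDiff_pi.trans (forall_congr' fun _ => contDiff_pi))

lemma pd_entry {f : (Fin n → ℝ) → Matrix (Fin N) (Fin N) ℂ} (hf : Differentiable ℝ f) (μ : Fin n)
    (a b : Fin N) (x : Fin n → ℝ) :
    pd μ (fun y => f y a b) x = fderiv ℝ f x (Pi.single μ 1) a b :=
  fderiv_linearMap_comp (Matrix.entryLinearMap ℝ ℂ a b) (hf x) _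

lemma pd_oneForm (hA : Differentiable ℝ fun x => oneForm (A x)) (μ ν : Fin n) (a b : Fin N)
    (x : Fin n → ℝ) : pd μ (fun y => A y ν a b) x =
      fderiv ℝ (fun y => oneForm (A y)) x (Pi.single μ 1) (Pi.single ν 1) a b := by
  have hA' := differentiable_oneForm_iff.1 hA
  rw [fderiv_oneForm_apply_single hA']
  exact pd_entry (hA' ν) μ a b x

lemma pd_twoForm (hF : Differentiable ℝ fun x => twoForm (F x)) (μ ν ρ : Fin n) (a b : Fin N)
    (x : Fin n → ℝ) : pd μ (fun y => F y ν ρ a b) x =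
      fderiv ℝ (fun y => twoForm (F y)) x (Pi.single μ 1) (Pi.single ν 1) (Pi.single ρ 1) a b := by
  have hF' := differentiable_twoForm_iff.1 hF
  rw [fderiv_twoForm_apply_single hF']
  exact pd_entry (hF' ν ρ) μ a b x

lemma mem_fockSchwingerSet_iff :
    A ∈ FockSchwingerSet n N ↔ (fun x => oneForm (A x)) ∈ radialGauge (Fin n → ℝ) _ := by
  refine and_congr (by simp only [contDiff_oneForm_iff, contDiff_matrix_iff])
    (forall_congr' fun x => ?_)
  simp [oneForm_apply, ← Matrix.ext_iff, Matrix.sum_apply]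

lemma twoForm_curvMap (hA : A ∈ FockSchwingerSet n N) (x : Fin n → ℝ) :
    twoForm (curvMap g A x) =
      curvature (scaledCommutator _ (Complex.I * g)) (fun x => oneForm (A x)) x := by
  have hdiff : Differentiable ℝ fun x => oneForm (A x) :=
    (mem_fockSchwingerSet_iff.1 hA).1.differentiable (by simp)
  refine twoForm_eq_iff.2 fun μ ν => ?_
  ext a b
  simp [curvMap, curvature_apply, pd_oneForm hdiff, scaledCommutator_apply]

lemma oneForm_radConn (hF : Continuous fun x => twoForm (F x)) (x : Fin n → ℝ) :
    oneForm (radConn F x) = radialPotential (fun x => twoForm (F x)) x := by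
  refine oneForm_eq_iff.2 fun μ => ?_
  ext a b
  have hcont : Continuous fun t : ℝ => t • twoForm (F (t • x)) x := by
    have := hF.comp (by fun_prop : Continuous fun t : ℝ => t • x)
    fun_prop
  have hentry := intervalIntegral_linearMap_comp (Matrix.entryLinearMap ℝ ℂ a b ∘ₗ
    (ContinuousLinearMap.apply ℝ _ (Pi.single μ 1)).toLinearMap)
    (hcont.intervalIntegrable (μ := volume) 0 1)
  refine Eq.trans ?_ hentry
  simp [radConn, twoForm_apply]

lemma cyclicSum_covariantFDeriv_twoForm (hF : Differentiable ℝ fun x => twoForm (F x))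
    (x : Fin n → ℝ) (μ ν ρ : Fin n) (a b : Fin N) :
    cyclicSum (covariantFDeriv (scaledCommutator _ (Complex.I * g)) (fun x => oneForm (A x))
        (fun x => twoForm (F x)) x) (Pi.single μ 1) (Pi.single ν 1) (Pi.single ρ 1) a b =
      pd μ (fun y => F y ν ρ a b) x + pd ν (fun y => F y ρ μ a b) x
        + pd ρ (fun y => F y μ ν a b) x
        + Complex.I * (g : ℂ) *
          ((A x μ * F x ν ρ - F x ν ρ * A x μ) a b
            + (A x ν * F x ρ μ - F x ρ μ * A x ν) a b
            + (A x ρ * F x μ ν - F x μ ν * A x ρ) a b) := by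
  simp only [cyclicSum, covariantFDeriv_apply, scaledCommutator_apply, pd_twoForm hF,
    oneForm_single, twoForm_single, Matrix.add_apply, Matrix.smul_apply, smul_eq_mul]
  ring

lemma mem_bianchiSet_iff :
    F ∈ BianchiSet n N g ↔
      (fun x => twoForm (F x)) ∈ bianchiForms (Fin n → ℝ) (scaledCommutator _ (Complex.I * g)) := by
  simp only [BianchiSet, bianchiForms, mem_ofPred_eq, ← contDiff_matrix_iff, ← contDiff_twoForm_iff,
    twoForm_swap_iff]
  refine and_congr_right fun hF => and_congr_right' (forall_congr' fun x => ?_)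
  have hradial : (radialPotential fun x => twoForm (F x)) = fun x => oneForm (radConn F x) :=
    funext fun x => (oneForm_radConn hF.continuous x).symm
  simp only [← cyclicSum_covariantFDeriv_twoForm (hF.differentiable (by simp)), hradial]
  refine ⟨fun h u v w => ?_, fun h μ ν ρ a b => ?_⟩
  · refine cyclicSum_eq_zero_of_basis (Pi.basisFun ℝ (Fin n)) _ (fun μ ν ρ => ?_) u v w
    ext a b
    simpa using h μ ν ρ a b
  · simp [h]

theorem curvMap_mem_bianchiSet (hA : A ∈ FockSchwingerSet n N) :
    curvMap g A ∈ BianchiSet n N g := by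
  have hA' := mem_fockSchwingerSet_iff.1 hA
  rw [mem_bianchiSet_iff, funext (twoForm_curvMap hA)]
  obtain ⟨hbij, -⟩ :=
    curvature_map_bijective_fock_schwinger_general (E := Fin n → ℝ)
      (isLieBracket_scaledCommutator (Matrix (Fin N) (Fin N) ℂ) (Complex.I * g))
  exact hbij.mapsTo hA'

theorem radConn_mem_fockSchwingerSet (hF : F ∈ BianchiSet n N g) :
    radConn F ∈ FockSchwingerSet n N := by
  obtain ⟨hsmooth, hskew, -⟩ := mem_bianchiSet_iff.1 hF
  rw [mem_fockSchwingerSet_iff, funext (oneForm_radConn hsmooth.continuous)]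
  exact radialPotential_mem_radialGauge hsmooth hskew

theorem radConn_curvMap (hA : A ∈ FockSchwingerSet n N) : radConn (curvMap g A) = A := by
  have hF := (mem_bianchiSet_iff.1 (curvMap_mem_bianchiSet (g := g) hA)).1
  obtain ⟨-, hleft, -⟩ :=
    curvature_map_bijective_fock_schwinger_general (E := Fin n → ℝ)
      (isLieBracket_scaledCommutator (Matrix (Fin N) (Fin N) ℂ) (Complex.I * g))
  ext1 x
  refine oneForm.injective ?_
  rw [oneForm_radConn hF.continuous, funext (twoForm_curvMap hA),
    hleft (mem_fockSchwingerSet_iff.1 hA)]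

theorem curvMap_radConn (hF : F ∈ BianchiSet n N g) : curvMap g (radConn F) = F := by
  have hF' := mem_bianchiSet_iff.1 hF
  obtain ⟨-, -, hright⟩ :=
    curvature_map_bijective_fock_schwinger_general (E := Fin n → ℝ)
      (isLieBracket_scaledCommutator (Matrix (Fin N) (Fin N) ℂ) (Complex.I * g))
  ext1 x
  refine twoForm_injective ?_
  rw [twoForm_curvMap (radConn_mem_fockSchwingerSet hF),
    funext (oneForm_radConn hF'.1.continuous), hright hF']

end MatrixFields

/-- the curvature map is a bijection from smooth connections in the
Fock–Schwinger gauge onto smooth antisymmetric field strengths satisfying the Bianchi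
identity for curvature, with inverse given by the radial integral map `F ↦ A`. -/
theorem curvature_map_bijective_fock_schwinger
    {n N : ℕ} (hn : 1 ≤ n) (g : ℝ) :
    Set.BijOn (curvMap (n := n) (N := N) g) (FockSchwingerSet n N) (BianchiSet n N g) ∧
    Set.InvOn radConn (curvMap g) (FockSchwingerSet n N) (BianchiSet n N g) := by
  have hinv : InvOn radConn (curvMap g) (FockSchwingerSet n N) (BianchiSet n N g) :=
    ⟨fun _ => radConn_curvMap, fun _ => curvMap_radConn⟩
  exact ⟨hinv.bijOn (fun _ => curvMap_mem_bianchiSet) fun _ => radConn_mem_fockSchwingerSet, hinv⟩
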